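/- arXiv:1405.4176 — 3 statements merged into one kernel-verified Lean document; each statement's English description precedes it below -/
import Mathlib

section
/- For a, b > 0, the function x ↦ (e^{-ax} - e^{-(a+b)x})/(1 - e^{-x}) on (0, ∞) is completely monotone if and only if b is a positive integer. -/
open Real

/-- A function is completely monotone on `(0,∞)` if it is smooth there and its
`n`-th derivatives alternate in sign. -/
def CompletelyMonotoneOn (g : ℝ → ℝ) : Prop :=
  ContDiffOn ℝ (⊤ : ℕ∞) g (Set.Ioi 0) ∧
    ∀ n : ℕ, ∀ x > (0:ℝ), 0 ≤ (-1) ^ n * iteratedDeriv n g x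

theorem cmS_summable (l : ℝ) (hl : 0 < l) (n : ℕ) (x : ℝ) (hx : 0 < x) :
    Summable (fun k : ℕ => (l + k) ^ n * Real.exp (-(l + k) * x)) := by
  have hg : Summable (fun k : ℕ => ((n.factorial : ℝ) / (x / 2) ^ n * Real.exp (-l * (x / 2))) *
      Real.exp (k * (-(x / 2)))) :=
    (Real.summable_exp_nat_mul_iff.2 (by linarith)).mul_left _
  refine Summable.of_nonneg_of_le (fun k => by positivity) (fun k => ?_) hg
  have h1 := Real.pow_div_factorial_le_exp ((l + k) * (x / 2)) (by positivity) n
  rw [div_le_iff₀ (by positivity), mul_pow] at h1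
  have h2 : (l + k) ^ n ≤ (n.factorial : ℝ) / (x / 2) ^ n * Real.exp ((l + k) * (x / 2)) := by
    rw [div_mul_eq_mul_div, le_div_iff₀ (by positivity)]
    linarith
  calc _ ≤ ((n.factorial : ℝ) / (x / 2) ^ n * Real.exp ((l + k) * (x / 2))) *
        Real.exp (-(l + k) * x) := by gcongr
    _ = _ := by
      rw [mul_assoc, mul_assoc, ← Real.exp_add, ← Real.exp_add]
      congr 2
      ring

theorem cmS_hasDerivAt (l : ℝ) (hl : 0 < l) (n : ℕ) (x : ℝ) (hx : 0 < x) :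
    HasDerivAt (fun y => ∑' k : ℕ, (l + k) ^ n * Real.exp (-(l + k) * y))
      (-∑' k : ℕ, (l + k) ^ (n + 1) * Real.exp (-(l + k) * x)) x := by
  rw [← tsum_neg]
  refine hasDerivAt_tsum_of_isPreconnected (t := Set.Ioi (x / 2)) (y₀ := x) (y := x)
    (g := fun (k : ℕ) y => (l + k) ^ n * Real.exp (-(l + k) * y))
    (g' := fun (k : ℕ) y => -((l + k) ^ (n + 1) * Real.exp (-(l + k) * y)))
    (cmS_summable l hl (n + 1) (x / 2) (by linarith)) isOpen_Ioi isPreconnected_Ioi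
    ?_ ?_ ?_ (cmS_summable l hl n x hx) ?_
  · intro k y hy
    have h := (((hasDerivAt_id y).const_mul (-(l + k))).exp).const_mul ((l + k) ^ n)
    refine h.congr_deriv ?_
    simp only [id, mul_one]
    ring
  · intro k y hy
    have hy' : x / 2 < y := hy
    have hk : (0 : ℝ) < l + k := by positivity
    rw [norm_neg, Real.norm_of_nonneg (by positivity)]
    gcongr (l + k) ^ (n + 1) * Real.exp ?_
    nlinarith
  · exact Set.mem_Ioi.2 (by linarith)
  · exact Set.mem_Ioi.2 (by linarith)

theorem cm_geom (l : ℝ) (x : ℝ) (hx : 0 < x) :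
    ∑' k : ℕ, (l + k) ^ 0 * Real.exp (-(l + k) * x) = Real.exp (-l * x) / (1 - Real.exp (-x)) := by
  have h : ∀ k : ℕ, (l + k) ^ 0 * Real.exp (-(l + k) * x)
      = Real.exp (-l * x) * (Real.exp (-x)) ^ k := by
    intro k
    rw [← Real.exp_nat_mul, ← Real.exp_add, pow_zero, one_mul]
    congr 1
    ring
  simp_rw [h]
  rw [tsum_mul_left, tsum_geometric_of_lt_one (Real.exp_pos _).le
    (Real.exp_lt_one_iff.mpr (by linarith)), div_eq_mul_inv]

theorem cm_iter (a b : ℝ) (ha : 0 < a) (hb : 0 < b) (n : ℕ) : ∀ x > (0 : ℝ),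
    iteratedDeriv n (fun x => (Real.exp (-a * x) - Real.exp (-(a + b) * x)) / (1 - Real.exp (-x))) x
    = (-1) ^ n * (∑' k : ℕ, (a + k) ^ n * Real.exp (-(a + k) * x)
      - ∑' k : ℕ, (a + b + k) ^ n * Real.exp (-(a + b + k) * x)) := by
  induction n with
  | zero =>
    intro x hx
    rw [cm_geom _ _ hx, cm_geom _ _ hx, iteratedDeriv_zero]
    ring
  | succ n ih =>
    intro x hx
    rw [iteratedDeriv_succ]
    have h := ((cmS_hasDerivAt a ha n x hx).sub
      (cmS_hasDerivAt (a + b) (by linarith) n x hx)).const_mul ((-1) ^ n)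
    have h2 := h.congr_of_eventuallyEq (f₁ := iteratedDeriv n (fun x => (Real.exp (-a * x) -
      Real.exp (-(a + b) * x)) / (1 - Real.exp (-x)))) (by
        filter_upwards [Ioi_mem_nhds hx] with y hy
        exact ih y hy)
    rw [h2.deriv]
    ring

theorem cm_forward (a b : ℝ) (ha : 0 < a) (hb : 0 < b)
    (h : ∀ n : ℕ, ∀ x > (0 : ℝ), 0 ≤ (-1) ^ n * iteratedDeriv n (fun x => (Real.exp (-a * x) -
      Real.exp (-(a + b) * x)) / (1 - Real.exp (-x))) x) : ∃ n : ℕ, b = n + 1 := by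
  by_contra hne
  push Not at hne
  have hc : 0 < a + b := by linarith
  set p : ℕ → ℝ := fun k => (a + k) / (a + b) * Real.exp (1 - (a + k) / (a + b)) with hp
  have hp0 : ∀ k, 0 ≤ p k := fun k => by positivity
  have hp1 : ∀ k, p k < 1 := by
    intro k
    have hu : (a + k) / (a + b) - 1 ≠ 0 := by
      intro h0
      rw [sub_eq_zero, div_eq_one_iff_eq hc.ne'] at h0
      cases k with
      | zero => simp at h0; linarith
      | succ k => exact hne k (by push_cast at h0; linarith)
    have h1 := Real.add_one_lt_exp hu
    rw [sub_add_cancel] at h1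
    have h2 : p k < Real.exp ((a + k) / (a + b) - 1) * Real.exp (1 - (a + k) / (a + b)) := by
      simp only [hp]
      gcongr
    rw [← Real.exp_add] at h2
    simpa using h2
  have hkey : ∀ n k : ℕ, (a + k) ^ n * Real.exp (-(a + k) * (n / (a + b)))
      = ((a + b) ^ n * Real.exp (-n)) * p k ^ n := by
    intro n k
    simp only [hp]
    rw [mul_pow, ← Real.exp_nat_mul, div_pow]
    have : Real.exp (-(a + k) * (n / (a + b)))
        = Real.exp (-n) * Real.exp (n * (1 - (a + k) / (a + b))) := by
      rw [← Real.exp_add]; congr 1; field_simp; ring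
    rw [this]
    field_simp
  have hps : Summable p := by
    have h1 := cmS_summable a ha 1 ((1 : ℕ) / (a + b)) (by positivity)
    simp_rw [hkey 1] at h1
    rw [summable_mul_left_iff (by positivity)] at h1
    simpa using h1
  have hlim : Filter.Tendsto (fun n : ℕ => ∑' k, p k ^ n) Filter.atTop (nhds (∑' _k : ℕ, (0 : ℝ))) := by
    refine tendsto_tsum_of_dominated_convergence hps
      (fun k => tendsto_pow_atTop_nhds_zero_of_lt_one (hp0 k) (hp1 k)) ?_
    filter_upwards [Filter.eventually_ge_atTop 1] with n hn k
    rw [Real.norm_of_nonneg (pow_nonneg (hp0 k) n)]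
    exact pow_le_of_le_one (hp0 k) (hp1 k).le (by omega)
  rw [tsum_zero] at hlim
  obtain ⟨n, hn1, hn⟩ := ((hlim.eventually (gt_mem_nhds one_pos)).and
    (Filter.eventually_ge_atTop 1)).exists
  have hx : 0 < (n : ℝ) / (a + b) := by
    have : (0 : ℝ) < n := by exact_mod_cast hn
    positivity
  have hh := h n _ hx
  rw [cm_iter a b ha hb n _ hx, ← mul_assoc, ← mul_pow] at hh
  simp_rw [hkey n] at hh
  rw [tsum_mul_left] at hh
  have h0 := (cmS_summable (a + b) hc n _ hx).le_tsum 0 (fun k _ => by positivity)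
  have he : -(a + b + ((0 : ℕ) : ℝ)) * (n / (a + b)) = -n := by field_simp; simp
  rw [he] at h0
  have hC : 0 < (a + b) ^ n * Real.exp (-n) := by positivity
  simp only [Nat.cast_zero, add_zero] at h0
  rw [show ((-1 : ℝ) * -1) = 1 by norm_num, one_pow, one_mul] at hh
  nlinarith


theorem cm_iff_integer (a b : ℝ) (ha : 0 < a) (hb : 0 < b) :
    CompletelyMonotoneOn
        (fun x => (Real.exp (-a * x) - Real.exp (-(a + b) * x)) / (1 - Real.exp (-x)))
      ↔ ∃ n : ℕ, b = n + 1 := by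
  constructor
  · exact fun h => cm_forward a b ha hb h.2
  · rintro ⟨m, rfl⟩
    constructor
    · apply ContDiffOn.div
      · fun_prop
      · fun_prop
      · intro x hx
        have := Real.exp_lt_one_iff.mpr (show -x < 0 by simpa using hx)
        linarith
    · intro n x hx
      rw [cm_iter a _ ha hb n x hx, ← mul_assoc, ← mul_pow]
      have h := (cmS_summable a ha n x hx).sum_add_tsum_nat_add (m + 1)
      have h2 : 0 ≤ ∑ k ∈ Finset.range (m + 1), (a + k) ^ n * Real.exp (-(a + k) * x) :=
        Finset.sum_nonneg fun k _ => by positivity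
      have h3 : ∀ k : ℕ, a + ((m : ℝ) + 1) + k = a + ((k + (m + 1) : ℕ) : ℝ) := by
        intro k; push_cast; ring
      simp_rw [h3]
      rw [show ((-1 : ℝ) * -1) = 1 by norm_num, one_pow, one_mul]
      linarith
end

section
/- For a, b > 0 and λ ≥ 0, Γ(a+λ)Γ(a+b)/(Γ(a)Γ(a+b+λ)) = exp(-∫₀^∞ (1 - e^{-λx}) (e^{-ax} - e^{-(a+b)x})/(x(1 - e^{-x})) dx). -/
open Real MeasureTheory

lemma mbl_int (p q : ℝ) (hp : 0 < p) (hpq : p ≤ q) :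
    IntegrableOn (fun x : ℝ => x⁻¹ * (Real.exp (-p * x) - Real.exp (-q * x))) (Set.Ioi 0) := by
  have h1 : IntegrableOn (fun x : ℝ => (q - p) * Real.exp (-p * x)) (Set.Ioi 0) :=
    (integrableOn_exp_mul_Ioi (by linarith : -p < 0) 0).const_mul (q - p)
  refine Integrable.mono' h1 (by fun_prop) ?_
  refine (ae_restrict_iff' measurableSet_Ioi).2 (Filter.Eventually.of_forall fun x hx => ?_)
  have hx : 0 < x := hx
  have e : Real.exp (-q * x) = Real.exp (-p * x) * Real.exp (-((q - p) * x)) := by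
    rw [← Real.exp_add]; ring_nf
  have h2 : Real.exp (-((q - p) * x)) ≤ 1 := by
    apply Real.exp_le_one_iff.2
    have := mul_nonneg (sub_nonneg.2 hpq) hx.le
    linarith
  have h3 := Real.add_one_le_exp (-((q - p) * x))
  have h4 := Real.exp_pos (-p * x)
  have e2 : Real.exp (-p * x) - Real.exp (-q * x)
      = Real.exp (-p * x) * (1 - Real.exp (-((q - p) * x))) := by rw [e]; ring
  rw [e2, Real.norm_of_nonneg
    (mul_nonneg (inv_nonneg.2 hx.le) (mul_nonneg h4.le (by linarith))),
    inv_mul_le_iff₀ hx]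
  nlinarith

lemma mbl_frullani (p q : ℝ) (hp : 0 < p) (hpq : p ≤ q) :
    ∫ x in Set.Ioi (0:ℝ), x⁻¹ * (Real.exp (-p * x) - Real.exp (-q * x))
      = Real.log q - Real.log p := by
  have hq : 0 < q := by linarith
  have hc : Continuous (fun x : ℝ => Real.exp (-x)) := by fun_prop
  have := Frullani.integral_Ioi_eq (f := fun x : ℝ => Real.exp (-x)) (a := p) (b := q)
    (L := 1) (R := 0) (hc.locallyIntegrable.locallyIntegrableOn _) hp hq
    (by
      have := hc.tendsto 0
      simp only [neg_zero, Real.exp_zero] at this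
      exact this.mono_left nhdsWithin_le_nhds)
    (Real.tendsto_exp_neg_atTop_nhds_zero)
    (by simpa [smul_eq_mul, neg_mul] using mbl_int p q hp hpq)
  rw [Real.log_div hq.ne' hp.ne'] at this
  simpa [smul_eq_mul, neg_mul] using this

theorem malmsten_beta_laplace (a b l : ℝ) (ha : 0 < a) (hb : 0 < b) (hl : 0 ≤ l) :
    Gamma (a + l) * Gamma (a + b) / (Gamma a * Gamma (a + b + l))
      = Real.exp (-∫ x in Set.Ioi (0:ℝ),
          (1 - Real.exp (-l * x)) * (Real.exp (-a * x) - Real.exp (-(a + b) * x))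
            / (x * (1 - Real.exp (-x)))) := by
  let F : ℕ → ℝ → ℝ := fun n x => x⁻¹ * (Real.exp (-(a + n) * x) - Real.exp (-(a + b + n) * x))
    - x⁻¹ * (Real.exp (-(a + l + n) * x) - Real.exp (-(a + b + l + n) * x))
  have hF : ∀ (n : ℕ) (x : ℝ), F n x = x⁻¹ * ((1 - Real.exp (-l * x)) *
      (Real.exp (-a * x) - Real.exp (-(a + b) * x))) * Real.exp (-x) ^ n := by
    intro n x
    have e1 : ∀ c : ℝ, Real.exp (-(c + n) * x) = Real.exp (-c * x) * Real.exp (-x) ^ n := by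
      intro c
      rw [← Real.exp_nat_mul, ← Real.exp_add]; ring_nf
    have e2 : ∀ c : ℝ, Real.exp (-(c + l) * x) = Real.exp (-c * x) * Real.exp (-l * x) := by
      intro c
      rw [← Real.exp_add]; ring_nf
    simp only [F, e1, e2]
    ring
  have hi1 : ∀ n : ℕ, Integrable (fun x : ℝ => x⁻¹ * (Real.exp (-(a + n) * x)
      - Real.exp (-(a + b + n) * x))) (volume.restrict (Set.Ioi 0)) := fun n =>
    mbl_int _ _ (by positivity) (by linarith)
  have hi2 : ∀ n : ℕ, Integrable (fun x : ℝ => x⁻¹ * (Real.exp (-(a + l + n) * x)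
      - Real.exp (-(a + b + l + n) * x))) (volume.restrict (Set.Ioi 0)) := fun n =>
    mbl_int _ _ (by positivity) (by linarith)
  have hFi : ∀ n, Integrable (F n) (volume.restrict (Set.Ioi 0)) := fun n => (hi1 n).sub (hi2 n)
  have hFe : ∀ n : ℕ, ∫ x in Set.Ioi (0:ℝ), F n x = (Real.log (a + b + n) - Real.log (a + n))
      - (Real.log (a + b + l + n) - Real.log (a + l + n)) := by
    intro n
    rw [← mbl_frullani (a + n) (a + b + n) (by positivity) (by linarith),
      ← mbl_frullani (a + l + n) (a + b + l + n) (by positivity) (by linarith)]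
    exact integral_sub (hi1 n) (hi2 n)
  have hF0 : ∀ (n : ℕ), ∀ x ∈ Set.Ioi (0:ℝ), 0 ≤ F n x := by
    intro n x hx
    have hx : 0 < x := hx
    rw [hF]
    have h1 : Real.exp (-l * x) ≤ 1 := by
      apply Real.exp_le_one_iff.2
      have := mul_nonneg hl hx.le
      linarith
    have h2 : Real.exp (-(a + b) * x) ≤ Real.exp (-a * x) := by
      apply Real.exp_le_exp.2
      nlinarith
    have h3 := sub_nonneg.2 h1
    have h4 := sub_nonneg.2 h2
    positivity
  have hFn : ∀ n : ℕ, ∫ x in Set.Ioi (0:ℝ), ‖F n x‖ = ∫ x in Set.Ioi (0:ℝ), F n x := fun n =>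
    setIntegral_congr_fun measurableSet_Ioi fun x hx => Real.norm_of_nonneg (hF0 n x hx)
  have hsum : HasSum (fun n : ℕ => ∫ x in Set.Ioi (0:ℝ), F n x)
      (Real.log (Gamma a) + Real.log (Gamma (a + b + l)) - Real.log (Gamma (a + l))
        - Real.log (Gamma (a + b))) := by
    rw [hasSum_iff_tendsto_nat_of_nonneg
      (fun n => setIntegral_nonneg measurableSet_Ioi (hF0 n)),
      ← Filter.tendsto_add_atTop_iff_nat 1]
    refine ((((BohrMollerup.tendsto_log_gamma ha).add (BohrMollerup.tendsto_log_gamma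
      (by positivity : 0 < a + b + l))).sub (BohrMollerup.tendsto_log_gamma
      (by positivity : 0 < a + l))).sub (BohrMollerup.tendsto_log_gamma
      (by positivity : 0 < a + b))).congr fun n => ?_
    simp only [hFe, BohrMollerup.logGammaSeq, Finset.sum_sub_distrib]
    ring
  have key := hasSum_integral_of_summable_integral_norm hFi
    (by simp only [hFn]; exact hsum.summable)
  have h := key.unique hsum
  have hint : ∫ x in Set.Ioi (0:ℝ), (∑' n, F n x) = ∫ x in Set.Ioi (0:ℝ),
          (1 - Real.exp (-l * x)) * (Real.exp (-a * x) - Real.exp (-(a + b) * x))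
            / (x * (1 - Real.exp (-x))) := by
    refine setIntegral_congr_fun measurableSet_Ioi fun x hx => ?_
    have hx : 0 < x := hx
    have h1 : Real.exp (-x) < 1 := Real.exp_lt_one_iff.2 (by linarith)
    simp only [hF]
    rw [tsum_mul_left, tsum_geometric_of_lt_one (Real.exp_pos _).le h1, div_eq_mul_inv, mul_inv]
    ring
  rw [← hint, h]
  have g1 := Gamma_pos_of_pos ha
  have g2 := Gamma_pos_of_pos (by positivity : 0 < a + b + l)
  have g3 := Gamma_pos_of_pos (by positivity : 0 < a + l)
  have g4 := Gamma_pos_of_pos (by positivity : 0 < a + b)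
  rw [show -(Real.log (Gamma a) + Real.log (Gamma (a + b + l)) - Real.log (Gamma (a + l))
        - Real.log (Gamma (a + b))) = (Real.log (Gamma (a + l)) + Real.log (Gamma (a + b)))
        - (Real.log (Gamma a) + Real.log (Gamma (a + b + l))) by ring,
    Real.exp_sub, Real.exp_add, Real.exp_add, Real.exp_log g1, Real.exp_log g2,
    Real.exp_log g3, Real.exp_log g4]
end

section
/- For all a, b, s > 0, the function λ ↦ Γ(a+λ)Γ(a+b+s+λ)/(Γ(a+b+λ)Γ(a+s+λ)) is completely monotone on (0, ∞). -/
open Real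

open Filter Topology in
open scoped ComplexOrder in
theorem locUnif_iteratedDeriv {ι : Type*} {φ : Filter ι} [φ.NeBot] {P : ι → ℂ → ℂ} {G : ℂ → ℂ}
    {U : Set ℂ} (hU : IsOpen U) (h : TendstoLocallyUniformlyOn P G φ U)
    (hP : ∀ i, DifferentiableOn ℂ (P i) U) (n : ℕ) :
    (∀ i, DifferentiableOn ℂ (iteratedDeriv n (P i)) U) ∧
      TendstoLocallyUniformlyOn (fun i => iteratedDeriv n (P i)) (iteratedDeriv n G) φ U := by
  induction n with
  | zero => simpa using ⟨hP, h⟩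
  | succ n ih =>
    simp only [iteratedDeriv_succ]
    exact ⟨fun i => (ih.1 i).deriv hU, ih.2.deriv (Eventually.of_forall ih.1) hU⟩

/-- The open right half plane. -/
def rightHalf : Set ℂ := {z | 0 < z.re}

theorem isOpen_rightHalf : IsOpen rightHalf :=
  isOpen_lt continuous_const Complex.continuous_re

open scoped ComplexOrder in
/-- Holomorphic complete monotonicity. -/
def CMC (F : ℂ → ℂ) : Prop :=
  DifferentiableOn ℂ F rightHalf ∧
    ∀ n : ℕ, ∀ x : ℝ, 0 < x → 0 ≤ (-1) ^ n * iteratedDeriv n F (x : ℂ)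

theorem cmc_contDiffAt {F : ℂ → ℂ} (hF : DifferentiableOn ℂ F rightHalf) {x : ℝ} (hx : 0 < x)
    {n : WithTop ℕ∞} : ContDiffAt ℂ n F (x : ℂ) :=
  (hF.analyticAt (isOpen_rightHalf.mem_nhds (by simpa [rightHalf] using hx))).contDiffAt

open scoped ComplexOrder in
theorem CMC.mul {F G : ℂ → ℂ} (hF : CMC F) (hG : CMC G) : CMC (F * G) := by
  refine ⟨hF.1.mul hG.1, fun n x hx => ?_⟩
  rw [iteratedDeriv_mul (cmc_contDiffAt hF.1 hx) (cmc_contDiffAt hG.1 hx), Finset.mul_sum]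
  refine Finset.sum_nonneg fun i hi => ?_
  have hi' : i ≤ n := by simpa [Nat.lt_succ_iff] using hi
  have e : (-1 : ℂ) ^ n = (-1) ^ i * (-1) ^ (n - i) := by rw [← pow_add, Nat.add_sub_cancel' hi']
  have h1 := hF.2 i x hx
  have h2 := hG.2 (n - i) x hx
  have h3 : (0 : ℂ) ≤ (n.choose i : ℂ) := Nat.cast_nonneg _
  have h4 := mul_nonneg h3 (mul_nonneg h1 h2)
  rw [e]
  convert h4 using 1
  ring

open scoped ComplexOrder in
theorem CMC.add {F G : ℂ → ℂ} (hF : CMC F) (hG : CMC G) : CMC (F + G) := by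
  refine ⟨hF.1.add hG.1, fun n x hx => ?_⟩
  rw [iteratedDeriv_add (cmc_contDiffAt hF.1 hx) (cmc_contDiffAt hG.1 hx), mul_add]
  exact add_nonneg (hF.2 n x hx) (hG.2 n x hx)

open scoped ComplexOrder in
theorem cmc_const {c : ℝ} (hc : 0 ≤ c) : CMC (fun _ => (c : ℂ)) := by
  refine ⟨differentiableOn_const _, fun n x hx => ?_⟩
  rw [iteratedDeriv_const]
  split_ifs with h
  · subst h; simpa using hc
  · simp

open scoped ComplexOrder in
theorem cmc_inv {d : ℝ} (hd : 0 < d) : CMC (fun z => (z + (d : ℂ))⁻¹) := by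
  refine ⟨?_, fun n x hx => ?_⟩
  · intro z hz
    have : z + (d : ℂ) ≠ 0 := by
      intro h
      have := congrArg Complex.re h
      simp [rightHalf] at this hz
      linarith
    exact DifferentiableAt.differentiableWithinAt (by fun_prop (disch := assumption))
  · have h := congrFun (iter_deriv_inv_linear (𝕜 := ℂ) n 1 d) (x : ℂ)
    simp only [one_mul, one_pow, mul_one] at h
    rw [iteratedDeriv_eq_iterate, h]
    have e : (-1 : ℂ) ^ n * ((-1) ^ n * (n.factorial : ℂ) * ((x : ℂ) + d) ^ (-1 - n : ℤ))
        = (((n.factorial : ℝ) * (x + d) ^ (-1 - n : ℤ) : ℝ) : ℂ) := by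
      push_cast
      rw [← mul_assoc, ← mul_assoc, ← mul_pow]; simp
    rw [e, Complex.zero_le_real]
    positivity

theorem cmc_prod {ι : Type*} (t : Finset ι) {F : ι → ℂ → ℂ} (hF : ∀ i, CMC (F i)) :
    CMC (fun z => ∏ i ∈ t, F i z) := by
  classical
  induction t using Finset.induction_on with
  | empty => simpa using cmc_const (c := 1) zero_le_one
  | insert i t hi ih =>
    simp only [Finset.prod_insert hi]
    exact (hF i).mul ih

open Filter Topology in
open scoped ComplexOrder in
theorem cmc_limit {ι : Type*} {φ : Filter ι} [φ.NeBot] {P : ι → ℂ → ℂ} {G : ℂ → ℂ}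
    (h : TendstoLocallyUniformlyOn P G φ rightHalf) (hP : ∀ i, CMC (P i)) : CMC G := by
  refine ⟨h.differentiableOn (Eventually.of_forall fun i => (hP i).1) isOpen_rightHalf,
    fun n x hx => ?_⟩
  have h1 := (locUnif_iteratedDeriv isOpen_rightHalf h (fun i => (hP i).1) n).2.tendsto_at
    (show (x : ℂ) ∈ rightHalf by simpa [rightHalf] using hx)
  exact ge_of_tendsto' (h1.const_mul ((-1 : ℂ) ^ n)) fun i => (hP i).2 n x hx

open Filter Topology in
open scoped ComplexOrder in
theorem cmc_real {G : ℂ → ℂ} (hG : CMC G) {g : ℝ → ℝ} (hg : ∀ x : ℝ, 0 < x → g x = (G x).re) :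
    CompletelyMonotoneOn g := by
  have hd : ∀ n, DifferentiableOn ℂ (iteratedDeriv n G) rightHalf := by
    intro n
    induction n with
    | zero => simpa using hG.1
    | succ n ih => rw [iteratedDeriv_succ]; exact ih.deriv isOpen_rightHalf
  have key : ∀ n : ℕ, ∀ x : ℝ, 0 < x → iteratedDeriv n g x = (iteratedDeriv n G x).re := by
    intro n
    induction n with
    | zero => simpa using hg
    | succ n ih =>
      intro x hx
      have e : iteratedDeriv n g =ᶠ[𝓝 x] fun y : ℝ => (iteratedDeriv n G y).re := by
        filter_upwards [lt_mem_nhds hx] with y hy using ih y hy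
      rw [iteratedDeriv_succ, e.deriv_eq, iteratedDeriv_succ]
      exact (((hd n).differentiableAt (isOpen_rightHalf.mem_nhds
        (show (x : ℂ) ∈ rightHalf by simpa [rightHalf] using hx))).hasDerivAt.real_of_complex).deriv
  refine ⟨?_, fun n x hx => ?_⟩
  · have : ContDiffOn ℝ (⊤ : ℕ∞) (fun x : ℝ => (G x).re) (Set.Ioi 0) := by
      intro x hx
      have h1 : ContDiffAt ℝ (⊤ : ℕ∞) G (x : ℂ) :=
        (cmc_contDiffAt hG.1 hx).restrict_scalars ℝ
      have h2 : ContDiffAt ℝ (⊤ : ℕ∞) (fun x : ℝ => G x) x :=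
        h1.comp x Complex.ofRealCLM.contDiff.contDiffAt
      exact (Complex.reCLM.contDiff.contDiffAt.comp x h2).contDiffWithinAt
    exact this.congr fun x hx => hg x hx
  · have h := (Complex.le_def.1 (hG.2 n x hx)).1
    have e : ((-1 : ℂ) ^ n * iteratedDeriv n G x).re = (-1) ^ n * (iteratedDeriv n G x).re := by
      have : ((-1 : ℂ) ^ n) = (((-1) ^ n : ℝ) : ℂ) := by push_cast; rfl
      rw [this, Complex.re_ofReal_mul]
    rw [key n x hx, ← e]
    simpa using h

/-- The perturbation in the `k`-th factor of the infinite product. -/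
noncomputable def factorTerm (a b s : ℝ) (k : ℕ) (z : ℂ) : ℂ :=
  ((b * s : ℝ) : ℂ) * ((z + ((a + k : ℝ) : ℂ))⁻¹ * (z + ((a + b + s + k : ℝ) : ℂ))⁻¹)

theorem cmc_factor {a b s : ℝ} (ha : 0 < a) (hb : 0 < b) (hs : 0 < s) (k : ℕ) :
    CMC (factorTerm a b s k) :=
  (cmc_const (by positivity)).mul ((cmc_inv (by positivity)).mul (cmc_inv (by positivity)))

theorem factor_bound {a b s : ℝ} (ha : 0 < a) (hb : 0 < b) (hs : 0 < s) (k : ℕ) (hk : 1 ≤ k)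
    (z : ℂ) (hz : z ∈ rightHalf) : ‖factorTerm a b s k z‖ ≤ b * s * (1 / (k : ℝ) ^ 2) := by
  have hk' : (0 : ℝ) < k := by exact_mod_cast hk
  have hz' : 0 < z.re := hz
  have aux : ∀ d : ℝ, 0 < d → ‖(z + ((d + k : ℝ) : ℂ))⁻¹‖ ≤ 1 / k := by
    intro d hd
    rw [norm_inv, ← one_div]
    apply one_div_le_one_div_of_le hk'
    refine le_trans ?_ (Complex.re_le_norm _)
    simp only [Complex.add_re, Complex.ofReal_re]
    linarith
  unfold factorTerm
  rw [norm_mul, norm_mul, Complex.norm_real, Real.norm_of_nonneg (by positivity)]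
  have := mul_le_mul (aux a ha) (aux (a + b + s) (by positivity)) (norm_nonneg _) (by positivity)
  calc _ ≤ b * s * (1 / k * (1 / k)) := by gcongr
    _ = _ := by ring

open Filter Topology in
theorem gamma_prod_tendsto {a b s x : ℝ} (ha : 0 < a) (hb : 0 < b) (hs : 0 < s) (hx : 0 < x) :
    Tendsto (fun n : ℕ => ∏ k ∈ Finset.range (n + 1), (1 + factorTerm a b s k x)) atTop
      (𝓝 ((Gamma (a + x) * Gamma (a + b + s + x) / (Gamma (a + b + x) * Gamma (a + s + x)) : ℝ)
        : ℂ)) := by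
  have hne : Gamma (a + b + x) * Gamma (a + s + x) ≠ 0 :=
    mul_ne_zero (Gamma_pos_of_pos (by positivity)).ne' (Gamma_pos_of_pos (by positivity)).ne'
  have h := ((GammaSeq_tendsto_Gamma (a + x)).mul (GammaSeq_tendsto_Gamma (a + b + s + x))).div
    ((GammaSeq_tendsto_Gamma (a + b + x)).mul (GammaSeq_tendsto_Gamma (a + s + x))) hne
  refine ((Complex.continuous_ofReal.tendsto _).comp h).congr' ?_
  filter_upwards [eventually_gt_atTop 0] with n hn
  have hn' : (0 : ℝ) < n := by exact_mod_cast hn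
  have hf : ∀ k : ℕ, 1 + factorTerm a b s k x =
      (((a + b + x + k) * (a + s + x + k) / ((a + x + k) * (a + b + s + x + k)) : ℝ) : ℂ) := by
    intro k
    have e : (a + b + x + k) * (a + s + x + k) / ((a + x + k) * (a + b + s + x + k))
      = 1 + b * s * ((x + (a + k))⁻¹ * (x + (a + b + s + k))⁻¹) := by
      have h1 : a + x + k ≠ 0 := by positivity
      have h2 : a + b + s + x + k ≠ 0 := by positivity
      rw [show x + (a + k) = a + x + k by ring,
        show x + (a + b + s + k) = a + b + s + x + k by ring]
      field_simp
      ring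
    rw [e, factorTerm]
    push_cast
    rfl
  simp only [hf]
  rw [← Complex.ofReal_prod]
  simp only [Function.comp, Pi.div_apply]
  congr 1
  rw [Finset.prod_div_distrib, Finset.prod_mul_distrib, Finset.prod_mul_distrib]
  unfold GammaSeq
  have hp : ∀ d : ℝ, 0 < d → ∏ j ∈ Finset.range (n + 1), (d + (j : ℝ)) ≠ 0 := fun d hd =>
    Finset.prod_ne_zero_iff.2 fun j _ => by positivity
  have h1 := hp (a + x) (by positivity)
  have h2 := hp (a + b + s + x) (by positivity)
  have h3 := hp (a + b + x) (by positivity)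
  have h4 := hp (a + s + x) (by positivity)
  have hpow : (n : ℝ) ^ (a + x) * (n : ℝ) ^ (a + b + s + x)
      = (n : ℝ) ^ (a + b + x) * (n : ℝ) ^ (a + s + x) := by
    rw [← rpow_add hn', ← rpow_add hn']; congr 1; ring
  have q3 : (n : ℝ) ^ (a + b + x) ≠ 0 := (rpow_pos_of_pos hn' _).ne'
  have q4 : (n : ℝ) ^ (a + s + x) ≠ 0 := (rpow_pos_of_pos hn' _).ne'
  have hfac : (n.factorial : ℝ) ≠ 0 := by positivity
  generalize (n : ℝ) ^ (a + x) = p1 at *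
  generalize (n : ℝ) ^ (a + b + s + x) = p2 at *
  generalize (n : ℝ) ^ (a + b + x) = p3 at *
  generalize (n : ℝ) ^ (a + s + x) = p4 at *
  generalize (∏ j ∈ Finset.range (n + 1), (a + x + (j : ℝ))) = r1 at *
  generalize (∏ j ∈ Finset.range (n + 1), (a + b + s + x + (j : ℝ))) = r2 at *
  generalize (∏ j ∈ Finset.range (n + 1), (a + b + x + (j : ℝ))) = r3 at *
  generalize (∏ j ∈ Finset.range (n + 1), (a + s + x + (j : ℝ))) = r4 at *
  rw [div_mul_div_comm, div_mul_div_comm, div_div_div_eq, div_eq_div_iff (by positivity)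
    (by positivity)]
  linear_combination (n.factorial : ℝ) ^ 2 * r3 * r4 * r1 * r2 * hpow

open Filter Topology in
theorem gamma_ratio_completely_monotone (a b s : ℝ) (ha : 0 < a) (hb : 0 < b) (hs : 0 < s) :
    CompletelyMonotoneOn (fun l =>
      Gamma (a + l) * Gamma (a + b + s + l) / (Gamma (a + b + l) * Gamma (a + s + l))) := by
  have hsum : Summable fun k : ℕ => b * s * (1 / (k : ℝ) ^ 2) :=
    (Real.summable_one_div_nat_pow.2 one_lt_two).mul_left _
  have hprod := hsum.hasProdLocallyUniformlyOn_nat_one_add (f := factorTerm a b s)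
    isOpen_rightHalf
    (by filter_upwards [eventually_ge_atTop 1] with k hk using factor_bound ha hb hs k hk)
    (fun k => (cmc_factor ha hb hs k).1.continuousOn)
  rw [hasProdLocallyUniformlyOn_iff_tendstoLocallyUniformlyOn] at hprod
  have hone : CMC (fun _ => (1 : ℂ)) := by simpa using cmc_const (c := 1) zero_le_one
  have hC := cmc_limit hprod fun t => cmc_prod t fun k => hone.add (cmc_factor ha hb hs k)
  refine cmc_real hC fun x hx => ?_
  have h1 := hprod.tendsto_at (show (x : ℂ) ∈ rightHalf by simpa [rightHalf] using hx)
  have h2 := (h1.comp tendsto_finset_range).comp (tendsto_add_atTop_nat 1)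
  have h3 := tendsto_nhds_unique h2 (gamma_prod_tendsto ha hb hs hx)
  rw [h3, Complex.ofReal_re]
end
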